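/- (Fefferman–Stein vector-valued maximal inequality on spaces of homogeneous type.) Let X be a metric space and μ a doubling nonnegative Borel measure on X. Let 0 < p < ∞, 0 < q < ∞ and 0 < r < min(p, q). Then there exists a constant C > 0 such that for every sequence (f_ν)_{ν∈ℕ} of measurable functions on X, ‖ ( Σ_ν (M_r f_ν)^q )^{1/q} ‖_{L^p(X,μ)} ≤ C·‖ ( Σ_ν |f_ν|^q )^{1/q} ‖_{L^p(X,μ)}. -/

import Mathlib

open MeasureTheory Metric ENNReal

/-- The Hardy–Littlewood maximal function
`M_r f(x) = sup_{B ∋ x} (μ(B)⁻¹ ∫_B |f|^r dμ)^{1/r}`, the supremum being taken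
over all open balls `B` containing `x`. -/
noncomputable def maximalFn {X : Type*} [MetricSpace X] [MeasurableSpace X]
    (μ : Measure X) (r : ℝ) (f : X → ℝ) (x : X) : ℝ≥0∞ :=
  ⨆ (z : X) (ρ : ℝ) (_ : 0 < ρ) (_ : x ∈ ball z ρ),
    ((μ (ball z ρ))⁻¹ * ∫⁻ y in ball z ρ, ENNReal.ofReal (|f y| ^ r) ∂μ) ^ (1 / r)

/-!
Writing `g = |f| ^ r` reduces the theorem to `∫ (∑ (M g_i) ^ q) ^ s ≤ K ∫ (∑ g_i ^ q) ^ s` for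
`q > 1` and `q * s > 1`. Everything rests on the weighted inequality
`∫ (M g) ^ q w ≤ K ∫ g ^ q M w` of Fefferman and Stein: its weak-type version follows from the
Vitali covering theorem, because on a selected ball `M w` dominates the average of `w` over the
enlarged ball, and truncating `g` at the level set allows summation over dyadic levels.

For `s > 1`, sum the weighted inequality over `i` and test against `w ∈ L ^ t`, where `t` is the
exponent conjugate to `s`; Hölder's inequality and the boundedness of `M` on `L ^ t` conclude. For
`s ≤ 1`, put `F = (∑ g_i ^ q) ^ (1 / q)` and factor `g_i = φ_i ^ s * F ^ (1 - s)`, so that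
`∑ φ_i ^ (q * s) = F ^ (q * s)`. Hölder's inequality on each ball gives
`M g_i ≤ (M φ_i) ^ s * (M F) ^ (1 - s)`, and only the scalar bound on `L ^ (q * s)` is needed.
-/

open Set
open scoped NNReal

section DyadicInterpolation

theorem two_zpow_ne_zero (k : ℤ) : (2 : ℝ≥0∞) ^ k ≠ 0 :=
  (ENNReal.zpow_pos two_ne_zero ofNat_ne_top k).ne'

theorem two_zpow_ne_top (k : ℤ) : (2 : ℝ≥0∞) ^ k ≠ ∞ :=
  (ENNReal.zpow_lt_top two_ne_zero ofNat_ne_top k).ne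

theorem rpow_le_tsum_indicator_two_zpow {q : ℝ} (hq : 0 < q) (a : ℝ≥0∞) :
    a ^ q ≤ ∑' k : ℤ, (Ioi ((2 : ℝ≥0∞) ^ k)).indicator (fun _ ↦ ((2 : ℝ≥0∞) ^ (k + 1)) ^ q) a := by
  rcases eq_or_ne a 0 with rfl | ha₀
  · simp [hq]
  rcases eq_or_ne a ∞ with rfl | ha
  · have h_one_le (n : ℕ) : (1 : ℝ≥0∞) ≤
        (Ioi ((2 : ℝ≥0∞) ^ (n : ℤ))).indicator (fun _ ↦ ((2 : ℝ≥0∞) ^ ((n : ℤ) + 1)) ^ q) ∞ := by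
      rw [indicator_of_mem (mem_Ioi.2 (two_zpow_ne_top n).lt_top)]
      refine one_le_rpow ?_ hq
      exact_mod_cast one_le_pow₀ (M₀ := ℝ≥0∞) (n := n + 1) one_le_two
    calc ∞ ^ q ≤ ∑' _ : ℕ, (1 : ℝ≥0∞) := by
          rw [ENNReal.tsum_const_eq_top_of_ne_zero one_ne_zero]; exact le_top
      _ ≤ _ := ENNReal.tsum_le_tsum h_one_le
      _ ≤ _ := ENNReal.tsum_comp_le_tsum_of_injective Nat.cast_injective _
  · obtain ⟨n, hna, han⟩ := exists_mem_Ioc_zpow ha₀ ha one_lt_two ofNat_ne_top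
    calc a ^ q ≤ ((2 : ℝ≥0∞) ^ (n + 1)) ^ q := by gcongr
      _ = (Ioi ((2 : ℝ≥0∞) ^ n)).indicator (fun _ ↦ ((2 : ℝ≥0∞) ^ (n + 1)) ^ q) a :=
        (indicator_of_mem (mem_Ioi.2 hna) fun _ ↦ ((2 : ℝ≥0∞) ^ (n + 1)) ^ q).symm
      _ ≤ _ := ENNReal.le_tsum n

theorem tsum_indicator_two_zpow_le {s : ℝ} (hs : 0 < s) (a : ℝ≥0∞) :
    ∑' k : ℤ, (Ioi ((2 : ℝ≥0∞) ^ k)).indicator (fun _ ↦ ((2 : ℝ≥0∞) ^ k) ^ s) a ≤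
      (1 - 2⁻¹ ^ s)⁻¹ * a ^ s := by
  rcases eq_or_ne a 0 with rfl | ha₀
  · simp
  rcases eq_or_ne a ∞ with rfl | ha
  · rw [top_rpow_of_pos hs, ENNReal.mul_top (ENNReal.inv_ne_zero.2 (sub_ne_top one_ne_top))]
    exact le_top
  obtain ⟨n, hna, han⟩ := exists_mem_Ioc_zpow ha₀ ha one_lt_two ofNat_ne_top
  have hinj : Function.Injective fun j : ℕ ↦ n - (j : ℤ) := fun i j h ↦ by simpa using h
  have hsupp : Function.support (fun k : ℤ ↦
      (Ioi ((2 : ℝ≥0∞) ^ k)).indicator (fun _ ↦ ((2 : ℝ≥0∞) ^ k) ^ s) a) ⊆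
      range fun j : ℕ ↦ n - (j : ℤ) := fun k hk ↦ by
    have hka : a ∈ Ioi ((2 : ℝ≥0∞) ^ k) := by
      contrapose! hk
      simp [indicator_of_notMem hk]
    have hkn : k < n + 1 := by
      by_contra! h
      exact ((mem_Ioi.1 hka).trans_le han).not_ge (zpow_le_of_le one_le_two h)
    exact ⟨(n - k).toNat, by simp only; lia⟩
  rw [← hinj.tsum_eq hsupp, ← ENNReal.tsum_geometric, ← ENNReal.tsum_mul_right]
  refine ENNReal.tsum_le_tsum fun j ↦ ?_
  calc _ ≤ ((2 : ℝ≥0∞) ^ (n - (j : ℤ))) ^ s :=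
        indicator_le_self _ (fun _ ↦ ((2 : ℝ≥0∞) ^ (n - (j : ℤ))) ^ s) a
    _ = (2⁻¹ ^ s) ^ j * ((2 : ℝ≥0∞) ^ n) ^ s := by
      rw [ENNReal.zpow_sub two_ne_zero ofNat_ne_top, mul_rpow_of_nonneg _ _ hs.le, mul_comm,
        zpow_natCast, ENNReal.inv_pow, ← rpow_natCast_mul, mul_comm (j : ℝ), rpow_mul_natCast]
    _ ≤ (2⁻¹ ^ s) ^ j * a ^ s := by gcongr

theorem measurable_indicator_Ioi_comp {α : Type*} [MeasurableSpace α] {G : α → ℝ≥0∞}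
    (hG : Measurable G) (a c : ℝ≥0∞) : Measurable fun x ↦ (Ioi a).indicator (fun _ ↦ c) (G x) :=
  (measurable_const.indicator measurableSet_Ioi).comp hG

theorem lintegral_rpow_le_tsum_two_zpow {α : Type*} [MeasurableSpace α] {ν : Measure α}
    {G : α → ℝ≥0∞} (hG : Measurable G) {q : ℝ} (hq : 0 < q) :
    ∫⁻ x, G x ^ q ∂ν ≤ ∑' k : ℤ, ((2 : ℝ≥0∞) ^ (k + 1)) ^ q * ν {x | (2 : ℝ≥0∞) ^ k < G x} :=
  calc ∫⁻ x, G x ^ q ∂ν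
    _ ≤ ∫⁻ x, ∑' k : ℤ,
          (Ioi ((2 : ℝ≥0∞) ^ k)).indicator (fun _ ↦ ((2 : ℝ≥0∞) ^ (k + 1)) ^ q) (G x) ∂ν :=
      lintegral_mono fun x ↦ rpow_le_tsum_indicator_two_zpow hq (G x)
    _ = ∑' k : ℤ, ∫⁻ x,
          (Ioi ((2 : ℝ≥0∞) ^ k)).indicator (fun _ ↦ ((2 : ℝ≥0∞) ^ (k + 1)) ^ q) (G x) ∂ν :=
      lintegral_tsum fun _ ↦ (measurable_indicator_Ioi_comp hG _ _).aemeasurable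
    _ = _ := tsum_congr fun _ ↦ lintegral_indicator_const_comp hG measurableSet_Ioi _

theorem tsum_two_zpow_le_lintegral_rpow {α : Type*} [MeasurableSpace α] {ν : Measure α}
    {G : α → ℝ≥0∞} (hG : Measurable G) {s : ℝ} (hs : 0 < s) :
    ∑' k : ℤ, ((2 : ℝ≥0∞) ^ k) ^ s * ν {x | (2 : ℝ≥0∞) ^ k < G x} ≤
      (1 - 2⁻¹ ^ s)⁻¹ * ∫⁻ x, G x ^ s ∂ν :=
  calc ∑' k : ℤ, ((2 : ℝ≥0∞) ^ k) ^ s * ν {x | (2 : ℝ≥0∞) ^ k < G x}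
    _ = ∑' k : ℤ, ∫⁻ x, (Ioi ((2 : ℝ≥0∞) ^ k)).indicator (fun _ ↦ ((2 : ℝ≥0∞) ^ k) ^ s) (G x) ∂ν :=
      tsum_congr fun _ ↦ (lintegral_indicator_const_comp hG measurableSet_Ioi _).symm
    _ = ∫⁻ x, ∑' k : ℤ, (Ioi ((2 : ℝ≥0∞) ^ k)).indicator (fun _ ↦ ((2 : ℝ≥0∞) ^ k) ^ s) (G x) ∂ν :=
      (lintegral_tsum fun _ ↦ (measurable_indicator_Ioi_comp hG _ _).aemeasurable).symm
    _ ≤ ∫⁻ x, (1 - 2⁻¹ ^ s)⁻¹ * G x ^ s ∂ν :=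
      lintegral_mono fun x ↦ tsum_indicator_two_zpow_le hs (G x)
    _ = _ := lintegral_const_mul _ (hG.pow_const s)

theorem lintegral_rpow_le_of_truncated_weak_type {α β : Type*} [MeasurableSpace α]
    [MeasurableSpace β] {ν : Measure α} {ν' : Measure β} {G : α → ℝ≥0∞} {g : β → ℝ≥0∞}
    (hG : Measurable G) (hg : Measurable g) {A : ℝ≥0∞}
    (hweak : ∀ l, l ≠ 0 → l ≠ ∞ → ν {x | l < G x} ≤ A * l⁻¹ * ∫⁻ y in {y | l < 2 * g y}, g y ∂ν')
    {q : ℝ} (hq : 1 < q) :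
    ∫⁻ x, G x ^ q ∂ν ≤
      A * 2 ^ q * ((1 - 2⁻¹ ^ (q - 1))⁻¹ * 2 ^ (q - 1)) * ∫⁻ y, g y ^ q ∂ν' := by
  have hq₀ : 0 < q := by linarith
  have hq₁ : 0 < q - 1 := by linarith
  have h2g : Measurable fun y ↦ 2 * g y := hg.const_mul 2
  have hlevel (k : ℤ) : ((2 : ℝ≥0∞) ^ (k + 1)) ^ q * (A * ((2 : ℝ≥0∞) ^ k)⁻¹) =
      A * 2 ^ q * ((2 : ℝ≥0∞) ^ k) ^ (q - 1) := by
    rw [ENNReal.zpow_add two_ne_zero ofNat_ne_top, zpow_one, mul_rpow_of_nonneg _ _ hq₀.le,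
      rpow_sub _ _ (two_zpow_ne_zero k) (two_zpow_ne_top k), rpow_one, div_eq_mul_inv]
    ring
  have hpow (y : β) : g y * (2 * g y) ^ (q - 1) = 2 ^ (q - 1) * g y ^ q := by
    have hmul : g y * g y ^ (q - 1) = g y ^ q := by
      simpa using (rpow_add_of_nonneg (x := g y) 1 (q - 1) zero_le_one hq₁.le).symm
    rw [mul_rpow_of_nonneg _ _ hq₁.le, mul_left_comm, hmul]
  calc ∫⁻ x, G x ^ q ∂ν
    _ ≤ ∑' k : ℤ, ((2 : ℝ≥0∞) ^ (k + 1)) ^ q * ν {x | (2 : ℝ≥0∞) ^ k < G x} :=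
      lintegral_rpow_le_tsum_two_zpow hG hq₀
    _ ≤ ∑' k : ℤ, ((2 : ℝ≥0∞) ^ (k + 1)) ^ q *
          (A * ((2 : ℝ≥0∞) ^ k)⁻¹ * ∫⁻ y in {y | (2 : ℝ≥0∞) ^ k < 2 * g y}, g y ∂ν') := by
      gcongr with k
      exact hweak _ (two_zpow_ne_zero k) (two_zpow_ne_top k)
    _ = A * 2 ^ q * ∑' k : ℤ, ((2 : ℝ≥0∞) ^ k) ^ (q - 1) *
          (ν'.withDensity g) {y | (2 : ℝ≥0∞) ^ k < 2 * g y} := by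
      simp only [← mul_assoc, hlevel, ← ENNReal.tsum_mul_left,
        withDensity_apply _ (measurableSet_lt measurable_const h2g)]
    _ ≤ A * 2 ^ q * ((1 - 2⁻¹ ^ (q - 1))⁻¹ * ∫⁻ y, (2 * g y) ^ (q - 1) ∂ν'.withDensity g) := by
      gcongr
      exact tsum_two_zpow_le_lintegral_rpow h2g hq₁
    _ = A * 2 ^ q * ((1 - 2⁻¹ ^ (q - 1))⁻¹ * 2 ^ (q - 1)) * ∫⁻ y, g y ^ q ∂ν' := by
      rw [lintegral_withDensity_eq_lintegral_mul _ hg (h2g.pow_const _)]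
      simp only [Pi.mul_apply, hpow]
      rw [lintegral_const_mul _ (hg.pow_const q)]
      ring

end DyadicInterpolation

theorem iSup_rpow {ι : Sort*} {s : ℝ} (hs : 0 < s) (a : ι → ℝ≥0∞) :
    (⨆ i, a i) ^ s = ⨆ i, a i ^ s :=
  (orderIsoRpow s hs).map_iSup a

section Duality

variable {α : Type*} [MeasurableSpace α] {μ : Measure α}

theorem lintegral_rpow_le_of_forall_lintegral_mul_le {s t : ℝ} (hst : s.HolderConjugate t)
    {G : α → ℝ≥0∞} (hG : Measurable G) (hfin : ∫⁻ x, G x ^ s ∂μ ≠ ∞) {B : ℝ≥0∞}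
    (hB : ∀ w : α → ℝ≥0∞, Measurable w →
      ∫⁻ x, G x * w x ∂μ ≤ B * (∫⁻ x, w x ^ t ∂μ) ^ (1 / t)) :
    ∫⁻ x, G x ^ s ∂μ ≤ B ^ s := by
  set I := ∫⁻ x, G x ^ s ∂μ
  rcases eq_or_ne I 0 with hI | hI
  · simp [hI]
  have hmul (x : α) : G x * G x ^ (s - 1) = G x ^ s := by
    simpa using (rpow_add_of_nonneg (x := G x) 1 (s - 1) zero_le_one hst.sub_one_pos.le).symm
  have hpow (x : α) : (G x ^ (s - 1)) ^ t = G x ^ s := by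
    rw [← rpow_mul, hst.sub_one_mul_conj]
  have hself : I ^ (1 / s) * I ^ (1 / t) ≤ B * I ^ (1 / t) := by
    rw [← rpow_add _ _ hI hfin, hst.one_div_add_one_div, div_one, rpow_one]
    simpa only [hmul, hpow] using hB (fun x ↦ G x ^ (s - 1)) (hG.pow_const _)
  have hroot : I ^ (1 / s) ≤ B :=
    (ENNReal.mul_le_mul_iff_left (by simp [rpow_eq_zero_iff, hI, hfin])
      (rpow_ne_top_of_nonneg hst.symm.one_div_nonneg hfin)).1 hself
  exact (rpow_inv_le_iff hst.pos).1 (by rwa [one_div] at hroot)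

theorem lintegral_tsum_rpow_le_of_forall_finset {ι : Type*} [Countable ι] {h : ι → α → ℝ≥0∞}
    (hh : ∀ i, Measurable (h i)) {s : ℝ} (hs : 0 < s) {B : ℝ≥0∞}
    (hB : ∀ S : Finset ι, ∫⁻ x, (∑ i ∈ S, h i x) ^ s ∂μ ≤ B) :
    ∫⁻ x, (∑' i, h i x) ^ s ∂μ ≤ B := by
  have hmono (x : α) : Monotone fun S : Finset ι ↦ (∑ i ∈ S, h i x) ^ s := fun S T hST ↦ by
    dsimp only; gcongr
  calc ∫⁻ x, (∑' i, h i x) ^ s ∂μ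
    _ = ∫⁻ x, ⨆ S : Finset ι, (∑ i ∈ S, h i x) ^ s ∂μ := by
      refine lintegral_congr fun x ↦ ?_
      rw [ENNReal.tsum_eq_iSup_sum, iSup_rpow hs]
    _ = ⨆ S : Finset ι, ∫⁻ x, (∑ i ∈ S, h i x) ^ s ∂μ :=
      lintegral_iSup_directed
        (fun S ↦ ((Finset.measurable_fun_sum S fun i _ ↦ hh i).pow_const s).aemeasurable)
        (Monotone.directed_le fun S T hST x ↦ hmono x hST)
    _ ≤ B := iSup_le hB

end Duality

section Averages

variable {α : Type*} [MeasurableSpace α] {μ : Measure α}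

theorem setLAverage_const_le (s : Set α) (c : ℝ≥0∞) : ⨍⁻ _ in s, c ∂μ ≤ c := by
  rw [setLAverage_eq, setLIntegral_const]
  exact ENNReal.div_le_of_le_mul le_rfl

theorem measure_ne_zero_of_lt_setLAverage {s : Set α} {g : α → ℝ≥0∞} {l : ℝ≥0∞}
    (h : l < ⨍⁻ y in s, g y ∂μ) : μ s ≠ 0 := by
  intro hs
  simp [setLAverage_eq, setLIntegral_measure_zero s g hs] at h

theorem measure_ne_top_of_lt_setLAverage {s : Set α} {g : α → ℝ≥0∞} {l : ℝ≥0∞}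
    (h : l < ⨍⁻ y in s, g y ∂μ) : μ s ≠ ∞ := by
  intro hs
  simp [setLAverage_eq, hs] at h

end Averages

section MaximalFunction

variable {X : Type*} [PseudoMetricSpace X] [MeasurableSpace X] {μ : Measure X}

/-- The uncentered Hardy–Littlewood maximal function of an `ℝ≥0∞`-valued function. Membership
`x ∈ ball z ρ` already forces `0 < ρ`, and a ball of measure `0` or `∞` contributes `0`. -/
noncomputable def uncenteredMaximal (μ : Measure X) (g : X → ℝ≥0∞) (x : X) : ℝ≥0∞ :=
  ⨆ (z : X) (ρ : ℝ) (_ : x ∈ ball z ρ), ⨍⁻ y in ball z ρ, g y ∂μ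

theorem lt_uncenteredMaximal_iff {g : X → ℝ≥0∞} {x : X} {a : ℝ≥0∞} :
    a < uncenteredMaximal μ g x ↔ ∃ z ρ, x ∈ ball z ρ ∧ a < ⨍⁻ y in ball z ρ, g y ∂μ := by
  simp only [uncenteredMaximal, lt_iSup_iff, exists_prop]

theorem uncenteredMaximal_le_iff {g : X → ℝ≥0∞} {x : X} {a : ℝ≥0∞} :
    uncenteredMaximal μ g x ≤ a ↔ ∀ z ρ, x ∈ ball z ρ → ⨍⁻ y in ball z ρ, g y ∂μ ≤ a := by
  simp only [uncenteredMaximal, iSup_le_iff]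

theorem setLAverage_le_uncenteredMaximal (g : X → ℝ≥0∞) {x z : X} {ρ : ℝ} (hx : x ∈ ball z ρ) :
    ⨍⁻ y in ball z ρ, g y ∂μ ≤ uncenteredMaximal μ g x :=
  uncenteredMaximal_le_iff.1 le_rfl z ρ hx

theorem lowerSemicontinuous_uncenteredMaximal (g : X → ℝ≥0∞) :
    LowerSemicontinuous (uncenteredMaximal μ g) := by
  refine lowerSemicontinuous_iff_isOpen_preimage.2 fun a ↦ ?_
  have hlevel : uncenteredMaximal μ g ⁻¹' Ioi a =
      ⋃ (z : X) (ρ : ℝ) (_ : a < ⨍⁻ y in ball z ρ, g y ∂μ), ball z ρ := by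
    ext x
    simp only [mem_preimage, mem_Ioi, lt_uncenteredMaximal_iff, mem_iUnion, exists_prop, and_comm]
  rw [hlevel]
  exact isOpen_iUnion fun z ↦ isOpen_iUnion fun ρ ↦ isOpen_iUnion fun _ ↦ isOpen_ball

theorem measurable_uncenteredMaximal [OpensMeasurableSpace X] (g : X → ℝ≥0∞) :
    Measurable (uncenteredMaximal μ g) :=
  (lowerSemicontinuous_uncenteredMaximal g).measurable

theorem uncenteredMaximal_mono_ae {g h : X → ℝ≥0∞} (hgh : g ≤ᵐ[μ] h) (x : X) :
    uncenteredMaximal μ g x ≤ uncenteredMaximal μ h x :=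
  uncenteredMaximal_le_iff.2 fun _ _ hx ↦
    (laverage_mono_ae (ae_restrict_of_ae hgh)).trans (setLAverage_le_uncenteredMaximal h hx)

theorem uncenteredMaximal_const_le (c : ℝ≥0∞) (x : X) : uncenteredMaximal μ (fun _ ↦ c) x ≤ c :=
  uncenteredMaximal_le_iff.2 fun _ _ _ ↦ setLAverage_const_le _ c

theorem uncenteredMaximal_add_const_le (g : X → ℝ≥0∞) (c : ℝ≥0∞) (x : X) :
    uncenteredMaximal μ (fun y ↦ g y + c) x ≤ uncenteredMaximal μ g x + c := by
  refine uncenteredMaximal_le_iff.2 fun z ρ hx ↦ ?_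
  rw [laverage_eq', lintegral_add_right _ measurable_const]
  exact add_le_add (setLAverage_le_uncenteredMaximal g hx) (setLAverage_const_le _ c)

theorem uncenteredMaximal_rpow_mul_rpow_le {φ ψ : X → ℝ≥0∞} (hφ : Measurable φ)
    (hψ : Measurable ψ) {a b : ℝ} (ha : 0 ≤ a) (hb : 0 ≤ b) (hab : a + b = 1) (x : X) :
    uncenteredMaximal μ (fun y ↦ φ y ^ a * ψ y ^ b) x ≤
      uncenteredMaximal μ φ x ^ a * uncenteredMaximal μ ψ x ^ b :=
  uncenteredMaximal_le_iff.2 fun z ρ hx ↦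
    calc ⨍⁻ y in ball z ρ, φ y ^ a * ψ y ^ b ∂μ
      _ ≤ (⨍⁻ y in ball z ρ, φ y ∂μ) ^ a * (⨍⁻ y in ball z ρ, ψ y ∂μ) ^ b :=
        ENNReal.lintegral_mul_norm_pow_le hφ.aemeasurable hψ.aemeasurable ha hb hab
      _ ≤ _ := by gcongr <;> exact setLAverage_le_uncenteredMaximal _ hx

end MaximalFunction

section Doubling

variable {X : Type*} [PseudoMetricSpace X] [MeasurableSpace X]

/-- The doubling condition with constant `C`, for balls of every radius. (Mathlib's
`IsUnifLocDoublingMeasure` only concerns sufficiently small closed balls.) -/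
def IsDoublingWith (C : ℝ≥0) (μ : Measure X) : Prop :=
  ∀ (x : X) (r : ℝ), 0 < r → μ (ball x (2 * r)) ≤ C * μ (ball x r)

namespace IsDoublingWith

variable {μ : Measure X} {C : ℝ≥0}

theorem measure_ball_two_pow_mul_le (h : IsDoublingWith C μ) (x : X) {r : ℝ} (hr : 0 < r)
    (n : ℕ) : μ (ball x (2 ^ n * r)) ≤ C ^ n * μ (ball x r) := by
  induction n with
  | zero => simp
  | succ n ih =>
    calc μ (ball x (2 ^ (n + 1) * r)) = μ (ball x (2 * (2 ^ n * r))) := by ring_nf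
      _ ≤ C * μ (ball x (2 ^ n * r)) := h x _ (by positivity)
      _ ≤ C * (C ^ n * μ (ball x r)) := by gcongr
      _ = C ^ (n + 1) * μ (ball x r) := by ring

theorem sigmaFinite (h : IsDoublingWith C μ) {z : X} {ρ : ℝ} (hρ : 0 < ρ)
    (hfin : μ (ball z ρ) ≠ ∞) : SigmaFinite μ :=
  ⟨⟨{ set := fun n ↦ ball z (2 ^ n * ρ)
      set_mem := fun _ ↦ trivial
      finite := fun n ↦ (h.measure_ball_two_pow_mul_le z hρ n).trans_lt
        (mul_lt_top (pow_lt_top coe_lt_top) hfin.lt_top)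
      spanning := by
        refine iUnion_eq_univ_iff.2 fun x ↦ ?_
        obtain ⟨n, hn⟩ := pow_unbounded_of_one_lt (dist x z / ρ) one_lt_two
        exact ⟨n, mem_ball.2 ((div_lt_iff₀ hρ).1 hn)⟩ }⟩⟩

theorem setLIntegral_ball_four_mul_le [OpensMeasurableSpace X] (h : IsDoublingWith C μ)
    {g : X → ℝ≥0∞} {z : X} {ρ : ℝ} {l : ℝ≥0∞} (hl : l ≠ 0)
    (hlt : l < ⨍⁻ y in ball z ρ, g y ∂μ) (w : X → ℝ≥0∞) :
    ∫⁻ x in ball z (4 * ρ), w x ∂μ ≤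
      C ^ 2 * l⁻¹ * ∫⁻ x in ball z ρ, g x * uncenteredMaximal μ w x ∂μ := by
  have hμ₀ : μ (ball z ρ) ≠ 0 := measure_ne_zero_of_lt_setLAverage hlt
  have hμ : μ (ball z ρ) ≠ ∞ := measure_ne_top_of_lt_setLAverage hlt
  have hρ : 0 < ρ := nonempty_ball.1 (nonempty_of_measure_ne_zero hμ₀)
  have hsub : ball z ρ ⊆ ball z (4 * ρ) := ball_subset_ball (by linarith)
  have hμ4 : μ (ball z (4 * ρ)) ≤ C ^ 2 * μ (ball z ρ) := by
    simpa [show (2 : ℝ) ^ 2 = 4 by norm_num] using h.measure_ball_two_pow_mul_le z hρ 2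
  have hμ4₀ : μ (ball z (4 * ρ)) ≠ 0 := ((pos_iff_ne_zero.2 hμ₀).trans_le (measure_mono hsub)).ne'
  have hμ4' : μ (ball z (4 * ρ)) ≠ ∞ :=
    (hμ4.trans_lt (mul_lt_top (pow_lt_top coe_lt_top) hμ.lt_top)).ne
  have hμl : μ (ball z ρ) ≤ l⁻¹ * ∫⁻ y in ball z ρ, g y ∂μ := by
    rw [setLAverage_eq, ENNReal.lt_div_iff_mul_lt (.inl hμ₀) (.inl hμ)] at hlt
    calc μ (ball z ρ) = l⁻¹ * (l * μ (ball z ρ)) := by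
          rw [ENNReal.inv_mul_cancel_left hl (hlt.ne_top ∘ fun h ↦ by simp [h, hμ₀])]
      _ ≤ l⁻¹ * ∫⁻ y in ball z ρ, g y ∂μ := by gcongr
  set avg := ⨍⁻ y in ball z (4 * ρ), w y ∂μ
  calc ∫⁻ x in ball z (4 * ρ), w x ∂μ = μ (ball z (4 * ρ)) * avg := by
        rw [show avg = _ from setLAverage_eq .., ENNReal.mul_div_cancel hμ4₀ hμ4']
    _ ≤ C ^ 2 * (l⁻¹ * ∫⁻ y in ball z ρ, g y ∂μ) * avg := by gcongr; exact hμ4.trans (by gcongr)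
    _ = C ^ 2 * l⁻¹ * ((∫⁻ y in ball z ρ, g y ∂μ) * avg) := by ring
    _ ≤ C ^ 2 * l⁻¹ * ∫⁻ y in ball z ρ, g y * avg ∂μ := by gcongr; exact lintegral_mul_const_le _ _
    _ ≤ C ^ 2 * l⁻¹ * ∫⁻ x in ball z ρ, g x * uncenteredMaximal μ w x ∂μ := by
      gcongr _ * ?_
      refine setLIntegral_mono' measurableSet_ball fun x hx ↦ ?_
      gcongr
      exact setLAverage_le_uncenteredMaximal w (hsub hx)

theorem exists_countable_disjoint_covering [OpensMeasurableSpace X] (h : IsDoublingWith C μ)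
    {t : Set (X × ℝ)} {R : ℝ} (hR : ∀ B ∈ t, B.2 ≤ R) (ht₀ : ∀ B ∈ t, μ (ball B.1 B.2) ≠ 0)
    (ht : ∀ B ∈ t, μ (ball B.1 B.2) ≠ ∞) :
    ∃ u ⊆ t, u.Countable ∧ (u.PairwiseDisjoint fun B ↦ ball B.1 B.2) ∧
      ⋃ B ∈ t, ball B.1 B.2 ⊆ ⋃ B ∈ u, ball B.1 (4 * B.2) := by
  rcases t.eq_empty_or_nonempty with rfl | ⟨B₀, hB₀⟩
  · exact ⟨∅, Subset.rfl, by simp⟩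
  have : SigmaFinite μ :=
    h.sigmaFinite (nonempty_ball.1 (nonempty_of_measure_ne_zero (ht₀ B₀ hB₀))) (ht B₀ hB₀)
  obtain ⟨u, hut, hdisj, hcov⟩ := Vitali.exists_disjoint_subfamily_covering_enlargement_ball
    t Prod.fst Prod.snd R hR 4 (by norm_num)
  refine ⟨u, hut, ?_, hdisj, iUnion₂_subset fun B hB ↦ ?_⟩
  · have hcount := Measure.countable_meas_pos_of_disjoint_iUnion (μ := μ)
      (fun B : u ↦ measurableSet_ball (x := B.1.1) (ε := B.1.2))
      (fun B B' hne ↦ hdisj B.2 B'.2 (Subtype.coe_ne_coe.2 hne))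
    refine countable_coe_iff.1 (countable_univ_iff.1 (hcount.mono fun B _ ↦ ?_))
    exact pos_iff_ne_zero.2 (ht₀ B (hut B.2))
  · obtain ⟨B', hB', hsub⟩ := hcov B hB
    exact hsub.trans (subset_biUnion_of_mem (u := fun B : X × ℝ ↦ ball B.1 (4 * B.2)) hB')

theorem setLIntegral_biUnion_ball_le [OpensMeasurableSpace X] (h : IsDoublingWith C μ)
    {g : X → ℝ≥0∞} {l : ℝ≥0∞} (hl : l ≠ 0) (w : X → ℝ≥0∞) {t : Set (X × ℝ)} {R : ℝ}
    (hR : ∀ B ∈ t, B.2 ≤ R) (ht : ∀ B ∈ t, l < ⨍⁻ y in ball B.1 B.2, g y ∂μ) :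
    ∫⁻ x in ⋃ B ∈ t, ball B.1 B.2, w x ∂μ ≤
      C ^ 2 * l⁻¹ * ∫⁻ x, g x * uncenteredMaximal μ w x ∂μ := by
  obtain ⟨u, hut, hcount, hdisj, hcov⟩ := h.exists_countable_disjoint_covering hR
    (fun B hB ↦ measure_ne_zero_of_lt_setLAverage (ht B hB))
    (fun B hB ↦ measure_ne_top_of_lt_setLAverage (ht B hB))
  have := hcount.to_subtype
  calc ∫⁻ x in ⋃ B ∈ t, ball B.1 B.2, w x ∂μ
    _ ≤ ∫⁻ x in ⋃ B : u, ball B.1.1 (4 * B.1.2), w x ∂μ :=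
      lintegral_mono_set (hcov.trans_eq (biUnion_eq_iUnion _ _))
    _ ≤ ∑' B : u, ∫⁻ x in ball B.1.1 (4 * B.1.2), w x ∂μ := lintegral_iUnion_le _ _
    _ ≤ ∑' B : u, C ^ 2 * l⁻¹ * ∫⁻ x in ball B.1.1 B.1.2, g x * uncenteredMaximal μ w x ∂μ :=
      ENNReal.tsum_le_tsum fun B ↦ h.setLIntegral_ball_four_mul_le hl (ht B (hut B.2)) w
    _ = C ^ 2 * l⁻¹ * ∫⁻ x in ⋃ B ∈ u, ball B.1 B.2, g x * uncenteredMaximal μ w x ∂μ := by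
      rw [ENNReal.tsum_mul_left, lintegral_biUnion hcount (fun _ _ ↦ measurableSet_ball) hdisj]
    _ ≤ _ := by gcongr; exact Measure.restrict_le_self

theorem setLIntegral_lt_uncenteredMaximal_le [OpensMeasurableSpace X] (h : IsDoublingWith C μ)
    (g w : X → ℝ≥0∞) {l : ℝ≥0∞} (hl : l ≠ 0) :
    ∫⁻ x in {x | l < uncenteredMaximal μ g x}, w x ∂μ ≤
      C ^ 2 * l⁻¹ * ∫⁻ x, g x * uncenteredMaximal μ w x ∂μ := by
  let t (n : ℕ) : Set (X × ℝ) := {B | B.2 ≤ n ∧ l < ⨍⁻ y in ball B.1 B.2, g y ∂μ}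
  have hlevel : {x | l < uncenteredMaximal μ g x} = ⋃ n, ⋃ B ∈ t n, ball B.1 B.2 := by
    ext x
    simp only [mem_ofPred_eq, lt_uncenteredMaximal_iff, mem_iUnion, exists_prop, t]
    constructor
    · rintro ⟨z, ρ, hx, hlt⟩
      obtain ⟨n, hn⟩ := exists_nat_ge ρ
      exact ⟨n, (z, ρ), ⟨hn, hlt⟩, hx⟩
    · rintro ⟨_, B, ⟨_, hlt⟩, hx⟩
      exact ⟨B.1, B.2, hx, hlt⟩
  have hmono : Monotone fun n ↦ ⋃ B ∈ t n, ball B.1 B.2 := fun m n hmn ↦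
    biUnion_subset_biUnion_left fun B hB ↦ ⟨hB.1.trans (Nat.cast_le.2 hmn), hB.2⟩
  rw [hlevel, setLIntegral_iUnion_of_directed _ hmono.directed_le]
  exact iSup_le fun n ↦ h.setLIntegral_biUnion_ball_le hl w (fun B hB ↦ hB.1) fun B hB ↦ hB.2

theorem setLIntegral_lt_uncenteredMaximal_le_truncated [OpensMeasurableSpace X]
    (h : IsDoublingWith C μ) {g : X → ℝ≥0∞} (hg : Measurable g) (w : X → ℝ≥0∞) {l : ℝ≥0∞}
    (hl : l ≠ 0) :
    ∫⁻ x in {x | l < uncenteredMaximal μ g x}, w x ∂μ ≤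
      2 * C ^ 2 * l⁻¹ * ∫⁻ x in {x | l < 2 * g x}, g x * uncenteredMaximal μ w x ∂μ := by
  set s := {x | l < 2 * g x}
  have hs : MeasurableSet s := measurableSet_lt measurable_const (hg.const_mul 2)
  have hsplit (x : X) : g x ≤ s.indicator g x + l / 2 := by
    by_cases hx : x ∈ s
    · simp [hx]
    · have : 2 * g x ≤ l := not_lt.1 hx
      simpa [hx] using (ENNReal.le_div_iff_mul_le (by simp) (by simp)).2 (by rwa [mul_comm])
  have hlevel : {x | l < uncenteredMaximal μ g x} ⊆
      {x | l / 2 < uncenteredMaximal μ (s.indicator g) x} := fun x hx ↦ by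
    have hx' : l < uncenteredMaximal μ (s.indicator g) x + l / 2 :=
      hx.trans_le ((uncenteredMaximal_mono_ae (.of_forall hsplit) x).trans
        (uncenteredMaximal_add_const_le _ _ x))
    contrapose! hx'
    calc _ ≤ l / 2 + l / 2 := by gcongr; exact not_lt.1 hx'
      _ = l := ENNReal.add_halves l
  calc ∫⁻ x in {x | l < uncenteredMaximal μ g x}, w x ∂μ
    _ ≤ ∫⁻ x in {x | l / 2 < uncenteredMaximal μ (s.indicator g) x}, w x ∂μ :=
      lintegral_mono_set hlevel
    _ ≤ C ^ 2 * (l / 2)⁻¹ * ∫⁻ x, s.indicator g x * uncenteredMaximal μ w x ∂μ :=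
      h.setLIntegral_lt_uncenteredMaximal_le _ w (ENNReal.half_pos hl).ne'
    _ = 2 * C ^ 2 * l⁻¹ * ∫⁻ x in s, g x * uncenteredMaximal μ w x ∂μ := by
      rw [← lintegral_indicator hs, ENNReal.inv_div (.inl ofNat_ne_top) (.inl two_ne_zero),
        div_eq_mul_inv, mul_left_comm, ← mul_assoc 2]
      simp only [indicator_mul_left]

theorem exists_lintegral_uncenteredMaximal_rpow_mul_le [OpensMeasurableSpace X]
    (h : IsDoublingWith C μ) {q : ℝ} (hq : 1 < q) :
    ∃ K : ℝ≥0, ∀ g w : X → ℝ≥0∞, Measurable g → Measurable w →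
      ∫⁻ x, uncenteredMaximal μ g x ^ q * w x ∂μ ≤
        K * ∫⁻ x, g x ^ q * uncenteredMaximal μ w x ∂μ := by
  set K : ℝ≥0∞ := 2 * C ^ 2 * 2 ^ q * ((1 - 2⁻¹ ^ (q - 1))⁻¹ * 2 ^ (q - 1))
  have hK : K ≠ ∞ := by
    have hhalf : (2⁻¹ : ℝ≥0∞) ^ (q - 1) < 1 :=
      rpow_lt_one ENNReal.one_half_lt_one (sub_pos.2 hq)
    finiteness [(tsub_pos_of_lt hhalf).ne']
  refine ⟨K.toNNReal, fun g w hg hw ↦ ?_⟩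
  have hMg : Measurable (uncenteredMaximal μ g) := measurable_uncenteredMaximal g
  have hMw : Measurable (uncenteredMaximal μ w) := measurable_uncenteredMaximal w
  have hweak (l : ℝ≥0∞) (hl : l ≠ 0) (_ : l ≠ ∞) :
      μ.withDensity w {x | l < uncenteredMaximal μ g x} ≤ 2 * C ^ 2 * l⁻¹ *
        ∫⁻ y in {y | l < 2 * g y}, g y ∂μ.withDensity (uncenteredMaximal μ w) := by
    rw [withDensity_apply _ (measurableSet_lt measurable_const hMg),
      restrict_withDensity (measurableSet_lt measurable_const (hg.const_mul 2)),
      lintegral_withDensity_eq_lintegral_mul _ hMw hg]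
    simpa only [Pi.mul_apply, mul_comm] using
      h.setLIntegral_lt_uncenteredMaximal_le_truncated hg w hl
  have hstrong := lintegral_rpow_le_of_truncated_weak_type hMg hg hweak hq
  rw [lintegral_withDensity_eq_lintegral_mul _ hw (hMg.pow_const q),
    lintegral_withDensity_eq_lintegral_mul _ hMw (hg.pow_const q)] at hstrong
  rw [coe_toNNReal hK]
  simpa only [K, Pi.mul_apply, mul_comm] using hstrong

theorem exists_lintegral_uncenteredMaximal_rpow_le [OpensMeasurableSpace X]
    (h : IsDoublingWith C μ) {q : ℝ} (hq : 1 < q) :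
    ∃ K : ℝ≥0, ∀ g : X → ℝ≥0∞, Measurable g →
      ∫⁻ x, uncenteredMaximal μ g x ^ q ∂μ ≤ K * ∫⁻ x, g x ^ q ∂μ := by
  obtain ⟨K, hK⟩ := h.exists_lintegral_uncenteredMaximal_rpow_mul_le hq
  refine ⟨K, fun g hg ↦ ?_⟩
  calc ∫⁻ x, uncenteredMaximal μ g x ^ q ∂μ
    _ ≤ K * ∫⁻ x, g x ^ q * uncenteredMaximal μ (fun _ ↦ 1) x ∂μ := by
      simpa using hK g (fun _ ↦ 1) hg measurable_const
    _ ≤ K * ∫⁻ x, g x ^ q ∂μ := by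
      gcongr with x
      exact mul_le_of_le_one_right' (uncenteredMaximal_const_le 1 x)

end IsDoublingWith

end Doubling

section Factorization

theorem rpow_inv_mul_rpow_one_sub_inv_rpow_mul {b c : ℝ≥0∞} (hbc : b ≤ c) (hc : c ≠ ∞) {s : ℝ}
    (hs : 0 < s) : (b ^ s⁻¹ * c ^ (1 - s⁻¹)) ^ s * c ^ (1 - s) = b := by
  rcases eq_or_ne c 0 with rfl | hc₀
  · simp [nonpos_iff_eq_zero.1 hbc, hs]
  rw [mul_rpow_of_nonneg _ _ hs.le, rpow_inv_rpow hs.ne', mul_assoc, ← rpow_mul,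
    ← rpow_add _ _ hc₀ hc, sub_mul, inv_mul_cancel₀ hs.ne', one_mul, sub_add_sub_cancel, sub_self,
    rpow_zero, mul_one]

theorem tsum_rpow_inv_mul_rpow_one_sub_inv_rpow_le {ι : Type*} {b : ι → ℝ≥0∞} {c : ℝ≥0∞}
    {q s : ℝ} (hq : 0 < q) (hs : 0 < s) (hbc : ∑' i, b i ^ q = c ^ q) :
    ∑' i, (b i ^ s⁻¹ * c ^ (1 - s⁻¹)) ^ (q * s) ≤ c ^ (q * s) := by
  have hqs : 0 < q * s := mul_pos hq hs
  rcases eq_or_ne c ∞ with rfl | hc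
  · simp [top_rpow_of_pos hqs]
  rcases eq_or_ne c 0 with rfl | hc₀
  · have hb : ∀ i, b i = 0 := by simpa [hq, hq.not_gt] using hbc
    simp [hb, hs, hqs]
  refine le_of_eq ?_
  calc ∑' i, (b i ^ s⁻¹ * c ^ (1 - s⁻¹)) ^ (q * s)
    _ = ∑' i, b i ^ q * c ^ ((1 - s⁻¹) * (q * s)) := by
      refine tsum_congr fun i ↦ ?_
      rw [mul_rpow_of_nonneg _ _ hqs.le, ← rpow_mul, ← rpow_mul, mul_comm q,
        inv_mul_cancel_left₀ hs.ne']
    _ = c ^ q * c ^ ((1 - s⁻¹) * (q * s)) := by rw [ENNReal.tsum_mul_right, hbc]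
    _ = c ^ (q * s) := by
      rw [← rpow_add _ _ hc₀ hc]
      congr 1
      field_simp
      ring

variable {X : Type*} [PseudoMetricSpace X] [MeasurableSpace X] {μ : Measure X} {ι : Type*}

theorem tsum_uncenteredMaximal_rpow_rpow_le {g φ : ι → X → ℝ≥0∞} {F : X → ℝ≥0∞}
    (hφ : ∀ i, Measurable (φ i)) (hF : Measurable F) {q s : ℝ} (hq : 0 ≤ q) (hs₀ : 0 ≤ s)
    (hs₁ : s ≤ 1) (hg : ∀ i, ∀ᵐ x ∂μ, g i x = φ i x ^ s * F x ^ (1 - s)) (x : X) :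
    (∑' i, uncenteredMaximal μ (g i) x ^ q) ^ s ≤
      (∑' i, uncenteredMaximal μ (φ i) x ^ (q * s)) ^ s *
        (uncenteredMaximal μ F x ^ (q * s)) ^ (1 - s) := by
  have hs₁' : 0 ≤ 1 - s := sub_nonneg.2 hs₁
  have hM (i : ι) : uncenteredMaximal μ (g i) x ^ q ≤
      uncenteredMaximal μ (φ i) x ^ (q * s) * uncenteredMaximal μ F x ^ (q * (1 - s)) := by
    rw [mul_comm q s, mul_comm q, rpow_mul, rpow_mul, ← mul_rpow_of_nonneg _ _ hq]
    gcongr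
    exact (uncenteredMaximal_mono_ae ((hg i).mono fun _ ↦ le_of_eq) x).trans
      (uncenteredMaximal_rpow_mul_rpow_le (hφ i) hF hs₀ hs₁' (add_sub_cancel s 1) x)
  calc (∑' i, uncenteredMaximal μ (g i) x ^ q) ^ s
    _ ≤ ((∑' i, uncenteredMaximal μ (φ i) x ^ (q * s)) *
          uncenteredMaximal μ F x ^ (q * (1 - s))) ^ s := by
      rw [← ENNReal.tsum_mul_right]
      gcongr with i
      exact hM i
    _ = _ := by rw [mul_rpow_of_nonneg _ _ hs₀, ← rpow_mul, ← rpow_mul, mul_right_comm]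

theorem lintegral_tsum_uncenteredMaximal_rpow_rpow_le [OpensMeasurableSpace X] [Countable ι]
    {g φ : ι → X → ℝ≥0∞} {F : X → ℝ≥0∞} (hφ : ∀ i, Measurable (φ i)) (hF : Measurable F)
    {q s : ℝ} (hq : 0 ≤ q) (hs₀ : 0 ≤ s) (hs₁ : s ≤ 1)
    (hg : ∀ i, ∀ᵐ x ∂μ, g i x = φ i x ^ s * F x ^ (1 - s)) :
    ∫⁻ x, (∑' i, uncenteredMaximal μ (g i) x ^ q) ^ s ∂μ ≤
      (∫⁻ x, ∑' i, uncenteredMaximal μ (φ i) x ^ (q * s) ∂μ) ^ s *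
        (∫⁻ x, uncenteredMaximal μ F x ^ (q * s) ∂μ) ^ (1 - s) :=
  (lintegral_mono (tsum_uncenteredMaximal_rpow_rpow_le hφ hF hq hs₀ hs₁ hg)).trans <|
    ENNReal.lintegral_mul_norm_pow_le
      (Measurable.tsum fun i ↦ (measurable_uncenteredMaximal (φ i)).pow_const _).aemeasurable
      ((measurable_uncenteredMaximal F).pow_const _).aemeasurable hs₀ (sub_nonneg.2 hs₁)
      (add_sub_cancel s 1)

end Factorization

section VectorValued

namespace IsDoublingWith

variable {X : Type*} [PseudoMetricSpace X] [MeasurableSpace X] [OpensMeasurableSpace X]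
  {μ : Measure X} {C : ℝ≥0} {ι : Type*}

theorem lintegral_sum_uncenteredMaximal_rpow_ne_top (h : IsDoublingWith C μ) {q s : ℝ}
    (hs : 1 ≤ s) (hqs : 1 < q * s) {g : ι → X → ℝ≥0∞} (hg : ∀ i, Measurable (g i))
    (hfin : ∫⁻ x, (∑' i, g i x ^ q) ^ s ∂μ ≠ ∞) (S : Finset ι) :
    ∫⁻ x, (∑ i ∈ S, uncenteredMaximal μ (g i) x ^ q) ^ s ∂μ ≠ ∞ := by
  obtain ⟨K, hK⟩ := h.exists_lintegral_uncenteredMaximal_rpow_le hqs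
  have hterm (i : ι) : ∫⁻ x, uncenteredMaximal μ (g i) x ^ (q * s) ∂μ < ∞ :=
    calc ∫⁻ x, uncenteredMaximal μ (g i) x ^ (q * s) ∂μ
      _ ≤ K * ∫⁻ x, g i x ^ (q * s) ∂μ := hK (g i) (hg i)
      _ ≤ K * ∫⁻ x, (∑' i, g i x ^ q) ^ s ∂μ := by
        gcongr with x
        rw [rpow_mul]
        gcongr
        exact ENNReal.le_tsum i
      _ < ∞ := mul_lt_top coe_lt_top hfin.lt_top
  refine ne_top_of_le_ne_top ?_ (lintegral_mono fun x ↦ rpow_sum_le_const_mul_sum_rpow S _ hs)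
  simp only [← rpow_mul]
  rw [lintegral_const_mul _ (Finset.measurable_fun_sum S fun i _ ↦
      (measurable_uncenteredMaximal _).pow_const _),
    lintegral_finsetSum S fun i _ ↦ (measurable_uncenteredMaximal _).pow_const _]
  exact mul_ne_top (rpow_ne_top_of_nonneg (by linarith) (by simp))
    (sum_ne_top.2 fun i _ ↦ (hterm i).ne)

variable [Countable ι]

theorem exists_lintegral_tsum_uncenteredMaximal_rpow_le_of_le_one (h : IsDoublingWith C μ)
    {q s : ℝ} (hq : 0 < q) (hs₁ : s ≤ 1) (hqs : 1 < q * s) :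
    ∃ K : ℝ≥0, ∀ g : ι → X → ℝ≥0∞, (∀ i, Measurable (g i)) →
      ∫⁻ x, (∑' i, uncenteredMaximal μ (g i) x ^ q) ^ s ∂μ ≤
        K * ∫⁻ x, (∑' i, g i x ^ q) ^ s ∂μ := by
  obtain ⟨K, hK⟩ := h.exists_lintegral_uncenteredMaximal_rpow_le hqs
  have hs₀ : 0 < s := pos_of_mul_pos_right (zero_lt_one.trans hqs) hq.le
  refine ⟨K + 1, fun g hg ↦ ?_⟩
  rcases eq_or_ne (∫⁻ x, (∑' i, g i x ^ q) ^ s ∂μ) ∞ with htop | hfin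
  · simp [htop]
  set F : X → ℝ≥0∞ := fun x ↦ (∑' i, g i x ^ q) ^ q⁻¹
  have hFq (x : X) : ∑' i, g i x ^ q = F x ^ q := (rpow_inv_rpow hq.ne' _).symm
  have hF : Measurable F := (Measurable.tsum fun i ↦ (hg i).pow_const q).pow_const _
  simp only [hFq, ← rpow_mul] at hfin ⊢
  have hF_top : ∀ᵐ x ∂μ, F x ≠ ∞ := (ae_lt_top (hF.pow_const _) hfin).mono fun x hx hFx ↦ by
    simp [hFx, top_rpow_of_pos (zero_lt_one.trans hqs)] at hx
  set φ : ι → X → ℝ≥0∞ := fun i x ↦ g i x ^ s⁻¹ * F x ^ (1 - s⁻¹)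
  have hφ (i : ι) : Measurable (φ i) := ((hg i).pow_const _).mul (hF.pow_const _)
  have hgφ (i : ι) : ∀ᵐ x ∂μ, g i x = φ i x ^ s * F x ^ (1 - s) := hF_top.mono fun x hx ↦
    (rpow_inv_mul_rpow_one_sub_inv_rpow_mul
      ((rpow_le_rpow_iff hq).1 ((ENNReal.le_tsum i).trans_eq (hFq x))) hx hs₀).symm
  have hMφ : ∫⁻ x, ∑' i, uncenteredMaximal μ (φ i) x ^ (q * s) ∂μ ≤
      K * ∫⁻ x, F x ^ (q * s) ∂μ := by
    rw [lintegral_tsum fun i ↦ ((measurable_uncenteredMaximal _).pow_const _).aemeasurable]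
    refine (ENNReal.tsum_le_tsum fun i ↦ hK (φ i) (hφ i)).trans ?_
    rw [ENNReal.tsum_mul_left, ← lintegral_tsum fun i ↦ ((hφ i).pow_const _).aemeasurable]
    gcongr with x
    exact tsum_rpow_inv_mul_rpow_one_sub_inv_rpow_le hq hs₀ (hFq x)
  calc ∫⁻ x, (∑' i, uncenteredMaximal μ (g i) x ^ q) ^ s ∂μ
    _ ≤ (∫⁻ x, ∑' i, uncenteredMaximal μ (φ i) x ^ (q * s) ∂μ) ^ s *
          (∫⁻ x, uncenteredMaximal μ F x ^ (q * s) ∂μ) ^ (1 - s) :=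
      lintegral_tsum_uncenteredMaximal_rpow_rpow_le hφ hF hq.le hs₀.le hs₁ hgφ
    _ ≤ (K * ∫⁻ x, F x ^ (q * s) ∂μ) ^ s * (K * ∫⁻ x, F x ^ (q * s) ∂μ) ^ (1 - s) := by
      gcongr
      exact hK F hF
    _ = K * ∫⁻ x, F x ^ (q * s) ∂μ := by
      rw [← rpow_add_of_nonneg _ _ hs₀.le (sub_nonneg.2 hs₁), add_sub_cancel, rpow_one]
    _ ≤ _ := by gcongr; exact_mod_cast le_self_add

theorem exists_lintegral_tsum_uncenteredMaximal_rpow_mul_le (h : IsDoublingWith C μ)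
    {q s t : ℝ} (hq : 1 < q) (hst : s.HolderConjugate t) :
    ∃ K : ℝ≥0, ∀ (g : ι → X → ℝ≥0∞) (w : X → ℝ≥0∞), (∀ i, Measurable (g i)) → Measurable w →
      ∫⁻ x, (∑' i, uncenteredMaximal μ (g i) x ^ q) * w x ∂μ ≤
        K * (∫⁻ x, (∑' i, g i x ^ q) ^ s ∂μ) ^ (1 / s) * (∫⁻ x, w x ^ t ∂μ) ^ (1 / t) := by
  obtain ⟨K, hK⟩ := h.exists_lintegral_uncenteredMaximal_rpow_mul_le hq
  obtain ⟨L, hL⟩ := h.exists_lintegral_uncenteredMaximal_rpow_le hst.symm.lt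
  refine ⟨K * L ^ (1 / t), fun g w hg hw ↦ ?_⟩
  have hgq (i : ι) : Measurable fun x ↦ g i x ^ q := (hg i).pow_const q
  have hMw : Measurable (uncenteredMaximal μ w) := measurable_uncenteredMaximal w
  have hgw (i : ι) : Measurable fun x ↦ g i x ^ q * uncenteredMaximal μ w x := (hgq i).mul hMw
  calc ∫⁻ x, (∑' i, uncenteredMaximal μ (g i) x ^ q) * w x ∂μ
    _ = ∑' i, ∫⁻ x, uncenteredMaximal μ (g i) x ^ q * w x ∂μ := by
      simp only [← ENNReal.tsum_mul_right]
      exact lintegral_tsum fun i ↦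
        (((measurable_uncenteredMaximal _).pow_const q).mul hw).aemeasurable
    _ ≤ ∑' i, K * ∫⁻ x, g i x ^ q * uncenteredMaximal μ w x ∂μ :=
      ENNReal.tsum_le_tsum fun i ↦ hK (g i) w (hg i) hw
    _ = K * ∫⁻ x, (∑' i, g i x ^ q) * uncenteredMaximal μ w x ∂μ := by
      simp only [← ENNReal.tsum_mul_right]
      rw [ENNReal.tsum_mul_left, lintegral_tsum fun i ↦ (hgw i).aemeasurable]
    _ ≤ K * ((∫⁻ x, (∑' i, g i x ^ q) ^ s ∂μ) ^ (1 / s) *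
          (∫⁻ x, uncenteredMaximal μ w x ^ t ∂μ) ^ (1 / t)) := by
      gcongr
      exact ENNReal.lintegral_mul_le_Lp_mul_Lq μ hst (Measurable.tsum hgq).aemeasurable
        hMw.aemeasurable
    _ ≤ K * ((∫⁻ x, (∑' i, g i x ^ q) ^ s ∂μ) ^ (1 / s) *
          (L * ∫⁻ x, w x ^ t ∂μ) ^ (1 / t)) := by
      gcongr
      · exact hst.symm.one_div_nonneg
      · exact hL w hw
    _ = _ := by
      rw [mul_rpow_of_nonneg _ _ hst.symm.one_div_nonneg, coe_mul,
        ← coe_rpow_of_nonneg _ hst.symm.one_div_nonneg]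
      ring

theorem exists_lintegral_tsum_uncenteredMaximal_rpow_le_of_one_lt (h : IsDoublingWith C μ)
    {q s : ℝ} (hq : 1 < q) (hs : 1 < s) :
    ∃ K : ℝ≥0, ∀ g : ι → X → ℝ≥0∞, (∀ i, Measurable (g i)) →
      ∫⁻ x, (∑' i, uncenteredMaximal μ (g i) x ^ q) ^ s ∂μ ≤
        K * ∫⁻ x, (∑' i, g i x ^ q) ^ s ∂μ := by
  have hs₀ : 0 < s := zero_lt_one.trans hs
  have hst : s.HolderConjugate s.conjExponent := .conjExponent hs
  obtain ⟨K, hK⟩ := h.exists_lintegral_tsum_uncenteredMaximal_rpow_mul_le (ι := ι) hq hst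
  refine ⟨K ^ s + 1, fun g hg ↦ ?_⟩
  rcases eq_or_ne (∫⁻ x, (∑' i, g i x ^ q) ^ s ∂μ) ∞ with htop | hfin
  · simp [htop]
  have hM (i : ι) : Measurable fun x ↦ uncenteredMaximal μ (g i) x ^ q :=
    (measurable_uncenteredMaximal _).pow_const q
  refine lintegral_tsum_rpow_le_of_forall_finset hM hs₀ fun S ↦ ?_
  calc ∫⁻ x, (∑ i ∈ S, uncenteredMaximal μ (g i) x ^ q) ^ s ∂μ
    _ ≤ (K * (∫⁻ x, (∑' i, g i x ^ q) ^ s ∂μ) ^ (1 / s)) ^ s := by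
      refine lintegral_rpow_le_of_forall_lintegral_mul_le hst
        (Finset.measurable_fun_sum S fun i _ ↦ hM i)
        (h.lintegral_sum_uncenteredMaximal_rpow_ne_top hs.le (one_lt_mul_of_lt_of_le hq hs.le)
          hg hfin S) fun w hw ↦ (lintegral_mono fun x ↦ ?_).trans (hK g w hg hw)
      gcongr
      exact ENNReal.sum_le_tsum S
    _ = K ^ s * ∫⁻ x, (∑' i, g i x ^ q) ^ s ∂μ := by
      rw [mul_rpow_of_nonneg _ _ hs₀.le, one_div, rpow_inv_rpow hs₀.ne']
    _ ≤ _ := by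
      gcongr
      rw [← coe_rpow_of_nonneg _ hs₀.le]
      exact_mod_cast le_self_add

theorem exists_lintegral_tsum_uncenteredMaximal_rpow_le (h : IsDoublingWith C μ)
    {q s : ℝ} (hq : 1 < q) (hqs : 1 < q * s) :
    ∃ K : ℝ≥0, ∀ g : ι → X → ℝ≥0∞, (∀ i, Measurable (g i)) →
      ∫⁻ x, (∑' i, uncenteredMaximal μ (g i) x ^ q) ^ s ∂μ ≤
        K * ∫⁻ x, (∑' i, g i x ^ q) ^ s ∂μ := by
  rcases le_or_gt s 1 with hs | hs
  · exact h.exists_lintegral_tsum_uncenteredMaximal_rpow_le_of_le_one (zero_lt_one.trans hq) hs hqs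
  · exact h.exists_lintegral_tsum_uncenteredMaximal_rpow_le_of_one_lt hq hs

end IsDoublingWith

end VectorValued

section PowerMaximalFunction

variable {X : Type*} [MeasurableSpace X]

/-- The maximal operator `M_r`, the `L^r` average replacing the `L^1` average, for
`ℝ≥0∞`-valued functions. -/
noncomputable def uncenteredMaximalRpow [PseudoMetricSpace X] (μ : Measure X) (r : ℝ)
    (g : X → ℝ≥0∞) (x : X) : ℝ≥0∞ :=
  uncenteredMaximal μ (fun y ↦ g y ^ r) x ^ (1 / r)

theorem maximalFn_eq_uncenteredMaximalRpow [MetricSpace X] (μ : Measure X) {r : ℝ} (hr : 0 < r)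
    (f : X → ℝ) (x : X) :
    maximalFn μ r f x = uncenteredMaximalRpow μ r (fun y ↦ ENNReal.ofReal |f y|) x := by
  simp only [maximalFn, uncenteredMaximalRpow, uncenteredMaximal, iSup_rpow (one_div_pos.2 hr),
    setLAverage_eq, ENNReal.div_eq_inv_mul, ofReal_rpow_of_nonneg (abs_nonneg _) hr.le]
  exact iSup_congr fun z ↦ iSup_congr fun ρ ↦ le_antisymm (iSup_le fun _ ↦ le_rfl)
    (iSup_le fun hx ↦ le_iSup₂_of_le (pos_of_mem_ball hx) hx le_rfl)

end PowerMaximalFunction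

theorem fefferman_stein_vector_valued_general {X : Type*} [PseudoMetricSpace X]
    [MeasurableSpace X] [OpensMeasurableSpace X] {μ : Measure X} {C₀ : ℝ≥0}
    (hμ : IsDoublingWith C₀ μ) {ι : Type*} [Countable ι] {p q r : ℝ} (hr : 0 < r) (hrp : r < p)
    (hrq : r < q) :
    ∃ C > (0 : ℝ), ∀ g : ι → X → ℝ≥0∞, (∀ i, Measurable (g i)) →
      (∫⁻ x, ((∑' i, uncenteredMaximalRpow μ r (g i) x ^ q) ^ (1 / q)) ^ p ∂μ) ^ (1 / p) ≤
        ENNReal.ofReal C * (∫⁻ x, ((∑' i, g i x ^ q) ^ (1 / q)) ^ p ∂μ) ^ (1 / p) := by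
  have hp : 0 < p := hr.trans hrp
  have hq : 0 < q := hr.trans hrq
  have hqp : q / r * (p / q) = p / r := by field_simp
  obtain ⟨K, hK⟩ := hμ.exists_lintegral_tsum_uncenteredMaximal_rpow_le (ι := ι) (q := q / r)
    (s := p / q) ((one_lt_div hr).2 hrq) (hqp ▸ (one_lt_div hr).2 hrp)
  refine ⟨(K + 1 : ℝ≥0) ^ (1 / p), by positivity, fun g hg ↦ ?_⟩
  have hKg := hK (fun i x ↦ g i x ^ r) fun i ↦ (hg i).pow_const r
  simp only [← rpow_mul, mul_div_cancel₀ _ hr.ne'] at hKg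
  simp only [uncenteredMaximalRpow, ← rpow_mul, one_div_mul_eq_div]
  calc _ ≤ (K * ∫⁻ x, (∑' i, g i x ^ q) ^ (p / q) ∂μ) ^ (1 / p) := by gcongr
    _ ≤ ((K + 1 : ℝ≥0) * ∫⁻ x, (∑' i, g i x ^ q) ^ (p / q) ∂μ) ^ (1 / p) := by
      gcongr
      exact le_self_add
    _ = _ := by
      rw [mul_rpow_of_nonneg _ _ (one_div_nonneg.2 hp.le),
        ← ofReal_rpow_of_nonneg (K + 1).coe_nonneg (one_div_nonneg.2 hp.le), ofReal_coe_nnreal]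

/-- Fefferman–Stein vector-valued maximal inequality on a doubling metric measure
space: for `0 < p < ∞`, `0 < q < ∞`, `0 < r < min(p,q)`, there is `C > 0` such that
`‖(Σ_ν (M_r f_ν)^q)^{1/q}‖_{L^p} ≤ C ‖(Σ_ν |f_ν|^q)^{1/q}‖_{L^p}` for every
sequence `(f_ν)` of measurable functions. -/
theorem fefferman_stein_vector_valued
    {X : Type*} [MetricSpace X] [MeasurableSpace X] [BorelSpace X]
    (μ : Measure X) (C₀ : ℝ) (hC₀ : 1 ≤ C₀)
    (hdouble : ∀ (x : X) (r : ℝ), 0 < r →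
      μ (ball x (2 * r)) ≤ ENNReal.ofReal C₀ * μ (ball x r))
    (p q r : ℝ) (hp : 0 < p) (hq : 0 < q) (hr : 0 < r) (hrpq : r < min p q) :
    ∃ C > (0 : ℝ), ∀ f : ℕ → X → ℝ, (∀ ν, Measurable (f ν)) →
      (∫⁻ x, ((∑' ν : ℕ, (maximalFn μ r (f ν) x) ^ q) ^ (1 / q)) ^ p ∂μ) ^ (1 / p)
        ≤ ENNReal.ofReal C *
          (∫⁻ x, ((∑' ν : ℕ, ENNReal.ofReal (|f ν x| ^ q)) ^ (1 / q)) ^ p ∂μ) ^ (1 / p) := by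
  obtain ⟨C, hC_pos, hC⟩ := fefferman_stein_vector_valued_general (ι := ℕ)
    (C₀ := C₀.toNNReal) hdouble hr (hrpq.trans_le (min_le_left p q))
    (hrpq.trans_le (min_le_right p q))
  refine ⟨C, hC_pos, fun f hf ↦ ?_⟩
  simpa only [maximalFn_eq_uncenteredMaximalRpow μ hr,
    ofReal_rpow_of_nonneg (abs_nonneg _) hq.le] using
    hC (fun ν x ↦ ENNReal.ofReal |f ν x|) fun ν ↦ (hf ν).abs.ennreal_ofReal
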